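/- Let G be a connected graph of order n₁ ≥ 2 and let H be a graph of order n₂ ≥ 2. Let α be the number of connected components of H of order greater than one and let β be the number of isolated vertices of H. Then pd(G⊙H) ≤ pd(G) + n₂ - α if α ≥ 1 and β ≥ 1; pd(G⊙H) ≤ pd(G) + n₂ - α + 1 if α ≥ 1 and β = 0; and pd(G⊙H) ≤ pd(G) + n₂ if α = 0. -/

import Mathlib

/-!
Take a resolving partition of `G` with `pd(G)` cells and keep its cells on the copy of `G` inside
the corona. Colour the copies of `H` uniformly by a map `f` on the vertices of `H`: a cell consists
of all copies of all vertices of a given colour. The distance from `(v, w)` to the vertex `b` of `G`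
is `d(v, b) + 1` (`dist_corona_inl`), so the cells of `G` separate vertices belonging to different
copies of `H`, as well as vertices of `G` from each other. Hence the partition resolves as soon as
two vertices of `H` of the same colour see different other colours in their neighbourhoods
(`partitionDim_corona_le`), and `pd(G ⊙ H) ≤ pd(G) + |range f|`.

For the choice of `f`, pick a representative in each nontrivial component of `H`, give all the
representatives one common colour, shared with an isolated vertex if there is one, and every other
vertex a colour of its own. A representative has a neighbour in its component; this neighbour is not
a representative, so its private colour is seen by no other vertex of the common colour.
-/

open SimpleGraph

/-- The corona product `G ⊙ H`: one copy of `G`, one copy of `H` for each vertex of `G`,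
with the `i`-th vertex of `G` joined to every vertex of the `i`-th copy of `H`. -/
def corona {α β : Type*} (G : SimpleGraph α) (H : SimpleGraph β) :
    SimpleGraph (α ⊕ α × β) :=
  SimpleGraph.fromRel (fun x y =>
    match x, y with
    | Sum.inl a, Sum.inl b => G.Adj a b
    | Sum.inl a, Sum.inr iu => a = iu.1
    | Sum.inr iu, Sum.inr jw => iu.1 = jw.1 ∧ H.Adj iu.2 jw.2
    | _, _ => False)

/-- The distance from a vertex to a set of vertices: `d(v,A) = min_{u ∈ A} d(v,u)`. -/
noncomputable def setDist {α : Type*} (G : SimpleGraph α) (v : α) (A : Set α) : ℕ :=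
  sInf (G.dist v '' A)

/-- `S` is a resolving set for `G`: distinct vertices have distinct metric representations. -/
def IsResolvingSet {α : Type*} (G : SimpleGraph α) (S : Set α) : Prop :=
  ∀ u v : α, (∀ w ∈ S, G.dist u w = G.dist v w) → u = v

/-- The metric dimension of `G`: minimum cardinality of a resolving set. -/
noncomputable def metricDim {α : Type*} (G : SimpleGraph α) : ℕ :=
  sInf {k | ∃ S : Set α, IsResolvingSet G S ∧ S.ncard = k}

/-- A family of sets is a resolving partition for `G` if it is a partition of the vertex set
into nonempty cells and distinct vertices have distinct partition representations. -/
def IsResolvingPartition {α : Type*} (G : SimpleGraph α) (P : Set (Set α)) : Prop :=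
  (∀ A ∈ P, A.Nonempty) ∧ (∀ v : α, ∃! A : Set α, A ∈ P ∧ v ∈ A) ∧
    ∀ u v : α, (∀ A ∈ P, setDist G u A = setDist G v A) → u = v

/-- The partition dimension of `G`: minimum number of cells in a resolving partition. -/
noncomputable def partitionDim {α : Type*} (G : SimpleGraph α) : ℕ :=
  sInf {t | ∃ P : Set (Set α), IsResolvingPartition G P ∧ P.ncard = t}

/-- `c(H)`: the maximum cardinality of a connected component of `H` which is isomorphic to a
complete graph (i.e. whose vertex set is a clique). -/
noncomputable def maxCompleteComp {β : Type*} (H : SimpleGraph β) : ℕ :=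
  sSup {k | ∃ C : H.ConnectedComponent, H.IsClique C.supp ∧ C.supp.ncard = k}

/-- `β(H)`: the number of isolated vertices of `H`. -/
noncomputable def numIsolated {β : Type*} (H : SimpleGraph β) : ℕ :=
  Set.ncard {v : β | ∀ u, ¬ H.Adj v u}

/-- `α(H)`: the number of connected components of `H` of order greater than one. -/
noncomputable def numBigComp {β : Type*} (H : SimpleGraph β) : ℕ :=
  Set.ncard {C : H.ConnectedComponent | 1 < C.supp.ncard}

/-- The fibres of a colouring `c` form a resolving partition as soon as equally coloured vertices
are separated; connectedness makes the fibres themselves separate different colours. -/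
lemma partitionDim_le_of_coloring {X K : Type*} [Finite X] (D : SimpleGraph X) (hD : D.Connected)
    (c : X → K)
    (h : ∀ u v, c u = c v → (∀ x, setDist D u (c ⁻¹' {c x}) = setDist D v (c ⁻¹' {c x})) → u = v) :
    partitionDim D ≤ (Set.range c).ncard := by
  classical
  have hP : IsResolvingPartition D ((fun k => c ⁻¹' {k}) '' Set.range c) := by
    refine ⟨?_, ?_, ?_⟩
    · rintro _ ⟨_, ⟨x, rfl⟩, rfl⟩
      exact ⟨x, rfl⟩
    · intro v
      refine ⟨c ⁻¹' {c v}, ⟨⟨_, ⟨v, rfl⟩, rfl⟩, rfl⟩, ?_⟩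
      rintro _ ⟨⟨_, ⟨x, rfl⟩, rfl⟩, hv⟩
      have : c v = c x := hv
      simp [this]
    · intro u v huv
      have huv' : ∀ x, setDist D u (c ⁻¹' {c x}) = setDist D v (c ⁻¹' {c x}) :=
        fun x => huv _ ⟨_, ⟨x, rfl⟩, rfl⟩
      refine h u v ?_ huv'
      have h0 : setDist D u (c ⁻¹' {c u}) = 0 :=
        Nat.sInf_eq_zero.2 (Or.inl ⟨u, rfl, by simp⟩)
      rw [huv' u] at h0
      rcases Nat.sInf_eq_zero.1 h0 with ⟨y, hy, hyv⟩ | he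
      · have : v = y := (hD.dist_eq_zero_iff).1 hyv
        subst this
        exact hy.symm
      · exact absurd he (Set.Nonempty.ne_empty ⟨_, u, rfl, rfl⟩)
  calc partitionDim D ≤ _ := Nat.sInf_le ⟨_, hP, rfl⟩
    _ ≤ _ := Set.ncard_image_le (Set.finite_range c)

lemma exists_resolvingPartition {V : Type*} (G : SimpleGraph V) (hG : G.Connected) :
    ∃ P : Set (Set V), IsResolvingPartition G P ∧ P.ncard = partitionDim G := by
  have hne : {t | ∃ P : Set (Set V), IsResolvingPartition G P ∧ P.ncard = t}.Nonempty := by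
    refine ⟨_, Set.range (fun v : V => ({v} : Set V)), ⟨?_, ?_, ?_⟩, rfl⟩
    · rintro _ ⟨v, rfl⟩
      exact ⟨v, rfl⟩
    · intro v
      refine ⟨{v}, ⟨⟨v, rfl⟩, rfl⟩, ?_⟩
      rintro _ ⟨⟨x, rfl⟩, hx⟩
      have : v = x := hx
      simp [this]
    · intro u v h
      have := h {u} ⟨u, rfl⟩
      simp only [setDist, Set.image_singleton, csInf_singleton, dist_self] at this
      exact ((hG.dist_eq_zero_iff).1 this.symm).symm
  exact Nat.sInf_mem hne

section Corona

variable {V W : Type*} {G : SimpleGraph V} {H : SimpleGraph W}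

lemma corona_adj_inl_inl {a b : V} : (corona G H).Adj (.inl a) (.inl b) ↔ G.Adj a b := by
  simp only [corona, fromRel_adj, ne_eq, Sum.inl.injEq]
  exact ⟨fun h => h.2.elim id (·.symm), fun h => ⟨h.ne, .inl h⟩⟩

lemma corona_adj_inl_inr {a : V} {p : V × W} :
    (corona G H).Adj (.inl a) (.inr p) ↔ a = p.1 := by
  simp [corona]

lemma corona_adj_inr_inr {p q : V × W} :
    (corona G H).Adj (.inr p) (.inr q) ↔ p.1 = q.1 ∧ H.Adj p.2 q.2 := by
  simp only [corona, fromRel_adj, ne_eq, Sum.inr.injEq]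
  constructor
  · rintro ⟨_, h | h⟩
    · exact h
    · exact ⟨h.1.symm, h.2.symm⟩
  · intro h
    exact ⟨fun e => h.2.ne (by rw [e]), .inl h⟩

/-- The distance in `G ⊙ H` from a vertex to the vertex `b` of the copy of `G`, in closed form. -/
noncomputable def distToBase (G : SimpleGraph V) (b : V) : V ⊕ V × W → ℕ
  | .inl a => G.dist a b
  | .inr p => G.dist p.1 b + 1

lemma distToBase_le_of_adj (hG : G.Connected) (b : V) {x y : V ⊕ V × W}
    (h : (corona G H).Adj x y) : distToBase G b x ≤ distToBase G b y + 1 := by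
  rcases x with a | p <;> rcases y with a' | q
  · rw [corona_adj_inl_inl] at h
    have := hG.dist_triangle (u := a) (v := a') (w := b)
    rw [dist_eq_one_iff_adj.2 h] at this
    simp only [distToBase]; omega
  · rw [corona_adj_inl_inr] at h
    simp only [distToBase, h]; omega
  · have h := h.symm
    rw [corona_adj_inl_inr] at h
    simp only [distToBase, h]; omega
  · rw [corona_adj_inr_inr] at h
    simp only [distToBase, h.1]; omega

lemma distToBase_le_length (hG : G.Connected) (b : V) {x y : V ⊕ V × W}
    (p : (corona G H).Walk x y) : distToBase G b x ≤ distToBase G b y + p.length := by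
  induction p with
  | nil => simp
  | cons h p ih =>
    have := distToBase_le_of_adj hG b h
    simp only [Walk.length_cons]; omega

lemma exists_walk_inl (hG : G.Connected) (b : V) (x : V ⊕ V × W) :
    ∃ p : (corona G H).Walk x (.inl b), p.length = distToBase G b x := by
  have key : ∀ a : V, ∃ p : (corona G H).Walk (.inl a) (.inl b), p.length = G.dist a b := by
    intro a
    obtain ⟨p, hp⟩ := hG.exists_walk_length_eq_dist a b
    let φ : G →g corona G H := ⟨Sum.inl, fun h => corona_adj_inl_inl.2 h⟩
    exact ⟨p.map φ, by rw [Walk.length_map]; exact hp⟩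
  rcases x with a | q
  · exact key a
  · obtain ⟨p, hp⟩ := key q.1
    refine ⟨Walk.cons (corona_adj_inl_inr.2 rfl).symm p, ?_⟩
    simp [distToBase, hp]

lemma corona_connected (hG : G.Connected) : (corona G H).Connected := by
  obtain ⟨b⟩ := hG.nonempty
  have : Nonempty (V ⊕ V × W) := ⟨.inl b⟩
  refine ⟨fun x y => ?_⟩
  obtain ⟨p, _⟩ := exists_walk_inl (H := H) hG b x
  obtain ⟨q, _⟩ := exists_walk_inl (H := H) hG b y
  exact ⟨p.append q.reverse⟩

lemma dist_corona_inl (hG : G.Connected) (b : V) (x : V ⊕ V × W) :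
    (corona G H).dist x (.inl b) = distToBase G b x := by
  apply le_antisymm
  · obtain ⟨p, hp⟩ := exists_walk_inl (H := H) hG b x
    exact hp ▸ dist_le p
  · obtain ⟨p, hp⟩ := (corona_connected (H := H) hG).exists_walk_length_eq_dist x (.inl b)
    have := distToBase_le_length hG b p
    have h0 : distToBase (W := W) G b (.inl b) = 0 := dist_self
    omega

lemma setDist_corona_inl (hG : G.Connected) (a : V) (A : Set V) :
    setDist (corona G H) (.inl a) (Sum.inl '' A) = setDist G a A := by
  simp only [setDist, Set.image_image, dist_corona_inl hG, distToBase]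

lemma setDist_corona_inr (hG : G.Connected) (p : V × W) {A : Set V} (hA : A.Nonempty) :
    setDist (corona G H) (.inr p) (Sum.inl '' A) = setDist G p.1 A + 1 := by
  simp only [setDist, Set.image_image, dist_corona_inl hG, distToBase]
  have h1 := Nat.sInf_mem (hA.image (G.dist p.1))
  have h2 := Nat.sInf_mem (hA.image (fun x => G.dist p.1 x + 1))
  obtain ⟨x, hx, hx'⟩ := h1
  obtain ⟨y, hy, hy'⟩ := h2
  have h3 : sInf ((fun x => G.dist p.1 x + 1) '' A) ≤ G.dist p.1 x + 1 := Nat.sInf_le ⟨x, hx, rfl⟩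
  have h4 : sInf (G.dist p.1 '' A) ≤ G.dist p.1 y := Nat.sInf_le ⟨y, hy, rfl⟩
  simp only at hy'
  omega

end Corona

lemma setDist_eq_one_of_adj {X : Type*} {D : SimpleGraph X} (hD : D.Connected) {v x : X} {A : Set X}
    (hv : v ∉ A) (hx : x ∈ A) (h : D.Adj v x) : setDist D v A = 1 := by
  have h1 : setDist D v A ≤ D.dist v x := Nat.sInf_le ⟨x, hx, rfl⟩
  rw [dist_eq_one_iff_adj.2 h] at h1
  have h0 : setDist D v A ≠ 0 := by
    intro h0
    rcases Nat.sInf_eq_zero.1 h0 with ⟨y, hy, hyv⟩ | he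
    · exact hv ((hD.dist_eq_zero_iff.1 hyv) ▸ hy)
    · exact absurd he (Set.Nonempty.ne_empty ⟨_, x, hx, rfl⟩)
  omega

lemma exists_adj_of_setDist_eq_one {X : Type*} {D : SimpleGraph X} {v : X} {A : Set X}
    (h : setDist D v A = 1) : ∃ x ∈ A, D.Adj v x := by
  have hne : (D.dist v '' A).Nonempty := Nat.nonempty_of_pos_sInf (by
    change 0 < setDist D v A; omega)
  obtain ⟨x, hx, hx'⟩ := Nat.sInf_mem hne
  refine ⟨x, hx, dist_eq_one_iff_adj.1 (hx'.trans h)⟩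

/-- A colouring `f` of `H` in which any two vertices of the same colour are distinguished by some
other colour present in exactly one of their neighbourhoods bounds `pd(G ⊙ H)`. -/
lemma partitionDim_corona_le {V W : Type*} [Finite V] [Finite W] (G : SimpleGraph V)
    (H : SimpleGraph W) (hG : G.Connected) (f : W → W)
    (hf : ∀ w w', f w = f w' →
      (∀ y, f y ≠ f w → ((∃ x, f x = f y ∧ H.Adj w x) ↔ ∃ x, f x = f y ∧ H.Adj w' x)) → w = w') :
    partitionDim (corona G H) ≤ partitionDim G + (Set.range f).ncard := by
  classical
  obtain ⟨P, ⟨hPne, hPu, hPr⟩, hPc⟩ := exists_resolvingPartition G hG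
  choose cell hcell huniq using hPu
  have hD := corona_connected (H := H) hG
  let c : V ⊕ V × W → Set V ⊕ W := Sum.map cell (fun p => f p.2)
  have hpre : ∀ A ∈ P, ∃ x : V ⊕ V × W, c ⁻¹' {c x} = Sum.inl '' A := by
    intro A hA
    obtain ⟨a, ha⟩ := hPne A hA
    have hcA : ∀ v, cell v = A ↔ v ∈ A := fun v =>
      ⟨fun h => h ▸ (hcell v).2, fun h => (huniq v A ⟨hA, h⟩).symm⟩
    refine ⟨.inl a, ?_⟩
    ext y
    rcases y with y | y
    · simp [c, (hcA a).2 ha, hcA]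
    · simp [c]
  have hcol : ∀ (v : V) (y : W), c ⁻¹' {c (.inr (v, y))} = {z | ∃ p, z = .inr p ∧ f p.2 = f y} := by
    intro v y
    ext z
    rcases z with z | z
    · simp [c]
    · refine ⟨fun h => ⟨z, rfl, Sum.inr.inj h⟩, fun ⟨p, hp, h⟩ => ?_⟩
      cases hp
      exact congrArg Sum.inr h
  refine (partitionDim_le_of_coloring (corona G H) hD c ?_).trans ?_
  · intro u v huv hdist
    have hA : ∀ A ∈ P, setDist (corona G H) u (Sum.inl '' A)
        = setDist (corona G H) v (Sum.inl '' A) := by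
      intro A hA
      obtain ⟨x, hx⟩ := hpre A hA
      rw [← hx]; exact hdist x
    rcases u with u | ⟨u, w⟩ <;> rcases v with v | ⟨v, w'⟩
    · congr 1
      apply hPr
      intro A hAP
      simpa only [setDist_corona_inl hG] using hA A hAP
    · simp [c] at huv
    · simp [c] at huv
    · have huv1 : u = v := by
        apply hPr
        intro A hAP
        simpa [setDist_corona_inr hG _ (hPne A hAP)] using hA A hAP
      subst huv1
      have hff : f w = f w' := by simpa [c] using huv
      -- At distance one from a foreign colour class means adjacent to it, within the same copy.
      have hadj : ∀ (w : W) (y : W), f y ≠ f w →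
          ((∃ x, f x = f y ∧ H.Adj w x) ↔
            setDist (corona G H) (.inr (u, w)) (c ⁻¹' {c (.inr (u, y))}) = 1) := by
        intro w y hy
        rw [hcol]
        constructor
        · rintro ⟨x, hx, hwx⟩
          refine setDist_eq_one_of_adj hD ?_ (x := .inr (u, x)) ⟨_, rfl, hx⟩
            (corona_adj_inr_inr.2 ⟨rfl, hwx⟩)
          rintro ⟨p, hp, hp'⟩
          cases hp
          exact hy hp'.symm
        · intro h
          obtain ⟨_, ⟨p, rfl, hp⟩, hx⟩ := exists_adj_of_setDist_eq_one h
          exact ⟨p.2, hp, (corona_adj_inr_inr.1 hx).2⟩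
      have : w = w' := by
        apply hf w w' hff
        intro y hy
        rw [hadj w y hy, hadj w' y (hff ▸ hy), hdist]
      rw [this]
  · have hsub : Set.range c ⊆ Sum.inl '' P ∪ Sum.inr '' Set.range f := by
      rintro _ ⟨x | x, rfl⟩
      · exact .inl ⟨_, (hcell x).1, rfl⟩
      · exact .inr ⟨_, ⟨x.2, rfl⟩, rfl⟩
    calc (Set.range c).ncard ≤ _ := Set.ncard_le_ncard hsub (Set.toFinite _)
      _ ≤ _ := Set.ncard_union_le _ _
      _ ≤ P.ncard + (Set.range f).ncard :=
        add_le_add (Set.ncard_image_le (Set.toFinite _)) (Set.ncard_image_le (Set.toFinite _))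
      _ = _ := by rw [hPc]

/-- A system of representatives of the nontrivial components of `H`: no two lie in one component,
and each has a neighbour. -/
lemma exists_representatives {W : Type*} (H : SimpleGraph W) :
    ∃ R : Set W, R.ncard = numBigComp H ∧ (∀ r ∈ R, ∃ x, H.Adj r x) ∧
      ∀ r ∈ R, ∀ s ∈ R, H.Reachable r s → r = s := by
  obtain ⟨g, hg⟩ : ∃ g : H.ConnectedComponent → W, ∀ C, H.connectedComponentMk (g C) = C :=
    ⟨Quot.out, Quot.out_eq⟩
  refine ⟨g '' {C : H.ConnectedComponent | 1 < C.supp.ncard}, ?_, ?_, ?_⟩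
  · exact Set.ncard_image_of_injective _ (fun C C' h => by rw [← hg C, h, hg C'])
  · rintro _ ⟨C, hC, rfl⟩
    obtain ⟨y, hy, hne⟩ := Set.exists_ne_of_one_lt_ncard hC (g C)
    have hr : H.Reachable (g C) y := by
      rw [← ConnectedComponent.eq, hg]; exact hy.symm
    obtain ⟨p⟩ := hr
    cases p with
    | nil => exact absurd rfl hne
    | cons h _ => exact ⟨_, h⟩
  · rintro _ ⟨C, _, rfl⟩ _ ⟨C', _, rfl⟩ h
    rw [← ConnectedComponent.eq, hg, hg] at h
    rw [h]

/-- The merged colour class is `R ∪ {b₀}`, where `b₀` is itself a representative or isolated. -/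
lemma partitionDim_corona_le_merge {V W : Type*} [Finite V] [Finite W] (G : SimpleGraph V)
    (H : SimpleGraph W) (hG : G.Connected) (R : Set W) (b₀ : W)
    (hnb : ∀ r ∈ R, ∃ x, H.Adj r x) (hR : ∀ r ∈ R, ∀ s ∈ R, H.Reachable r s → r = s)
    (hb : b₀ ∈ R ∨ ∀ u, ¬ H.Adj b₀ u) :
    partitionDim (corona G H) ≤ partitionDim G + (insert b₀ Rᶜ).ncard := by
  classical
  let f : W → W := fun w => if w ∈ R then b₀ else w
  have hfR : ∀ w ∈ R, f w = b₀ := fun w h => if_pos h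
  have hfn : ∀ w, w ∉ R → f w = w := fun w h => if_neg h
  have hrange : Set.range f ⊆ insert b₀ Rᶜ := by
    rintro _ ⟨w, rfl⟩
    by_cases h : w ∈ R
    · exact .inl (hfR w h)
    · right; rw [hfn w h]; exact h
  -- A neighbour `x` of `r ∈ R` has a private colour, which singles out `r` in its class.
  have key : ∀ r ∈ R, ∃ y, f y ≠ f r ∧ (∃ x, f x = f y ∧ H.Adj r x) ∧
      ∀ s, f s = f r → (∃ x, f x = f y ∧ H.Adj s x) → r = s := by
    intro r hr
    obtain ⟨x, hx⟩ := hnb r hr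
    have hxR : x ∉ R := fun h => hx.ne (hR r hr x h hx.reachable)
    have hxb : x ≠ b₀ := by
      rintro rfl
      exact hb.elim hxR (fun h => h r hx.symm)
    refine ⟨x, by rw [hfn x hxR, hfR r hr]; exact hxb, ⟨x, rfl, hx⟩, ?_⟩
    rintro s hs ⟨z, hz, hsz⟩
    have hzx : z = x := by
      by_cases h : z ∈ R
      · rw [hfR z h, hfn x hxR] at hz
        exact absurd hz.symm hxb
      · rwa [hfn z h, hfn x hxR] at hz
    subst hzx
    have hsR : s ∈ R := by
      by_contra h
      rw [hfn s h, hfR r hr] at hs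
      subst hs
      exact hb.elim h (fun h => h z hsz)
    exact hR r hr s hsR (hx.reachable.trans hsz.symm.reachable)
  refine (partitionDim_corona_le G H hG f ?_).trans
    (Nat.add_le_add_left (Set.ncard_le_ncard hrange (Set.toFinite _)) _)
  intro w w' hww h
  by_cases hw : w ∈ R
  · obtain ⟨y, hy, hwy, hs⟩ := key w hw
    exact hs w' hww.symm ((h y hy).1 hwy)
  by_cases hw' : w' ∈ R
  · obtain ⟨y, hy, hwy, hs⟩ := key w' hw'
    exact (hs w hww ((h y (hww ▸ hy)).2 hwy)).symm
  rwa [hfn w hw, hfn w' hw'] at hww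

/-- For a connected graph `G` of order `n₁ ≥ 2` and a graph `H` of order `n₂ ≥ 2`,
with `a` the number of components of `H` of order greater than one and `b` the number of
isolated vertices of `H`: `pd(G⊙H) ≤ pd(G)+n₂-a` if `a ≥ 1` and `b ≥ 1`;
`pd(G⊙H) ≤ pd(G)+n₂-a+1` if `a ≥ 1` and `b = 0`; and `pd(G⊙H) ≤ pd(G)+n₂` if `a = 0`. -/
theorem stmt2 {V W : Type*} [Fintype V] [Fintype W] (G : SimpleGraph V) (H : SimpleGraph W)
    (n₂ a b : ℕ) (h₁ : 2 ≤ Fintype.card V) (hn₂ : Fintype.card W = n₂) (h₂ : 2 ≤ n₂)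
    (hG : G.Connected) (ha : a = numBigComp H) (hb : b = numIsolated H) :
    (1 ≤ a → 1 ≤ b → partitionDim (corona G H) ≤ partitionDim G + n₂ - a) ∧
    (1 ≤ a → b = 0 → partitionDim (corona G H) ≤ partitionDim G + n₂ - a + 1) ∧
    (a = 0 → partitionDim (corona G H) ≤ partitionDim G + n₂) := by
  obtain ⟨R, hRc, hnb, hR⟩ := exists_representatives H
  have hcompl : R.ncard + Rᶜ.ncard = n₂ := by
    rw [Set.ncard_add_ncard_compl, Nat.card_eq_fintype_card, hn₂]
  rw [← ha] at hRc
  refine ⟨fun _ hb1 => ?_, fun ha1 _ => ?_, fun _ => ?_⟩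
  · obtain ⟨b₀, hb₀⟩ : {v : W | ∀ u, ¬ H.Adj v u}.Nonempty := by
      rw [← Set.ncard_pos]
      exact hb1.trans_eq hb
    have hbR : b₀ ∉ R := fun h => (hnb b₀ h).elim (fun x hx => hb₀ x hx)
    have := partitionDim_corona_le_merge G H hG R b₀ hnb hR (.inr hb₀)
    rw [Set.insert_eq_of_mem hbR] at this
    omega
  · obtain ⟨b₀, hb₀⟩ : R.Nonempty := by
      rw [← Set.ncard_pos]
      omega
    have := partitionDim_corona_le_merge G H hG R b₀ hnb hR (.inl hb₀)
    have h2 := Set.ncard_insert_le b₀ Rᶜ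
    omega
  · have := partitionDim_corona_le G H hG id (fun _ _ h _ => h)
    rwa [Set.range_id, Set.ncard_univ, Nat.card_eq_fintype_card, hn₂] at this
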